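/- For each dimension n there is a constant c_n > 0 such that the following holds: if (T^n, g) is any Riemannian metric on the n-dimensional torus and R < (1/2)·Sys(T^n, g), then there is a point x ∈ T^n such that the metric ball of radius R around x has Riemannian volume at least c_n · R^n. -/

import Mathlib

/-!
Formalization of a statement from L. Guth, "Systolic inequalities and minimal hypersurfaces"
(arXiv:0903.5299).

Since Mathlib does not have Riemannian metrics, a Riemannian metric `g` on a closed manifold
is encoded by its geodesic distance function: a (length/intrinsic) metric space structure.
Lengths of curves are computed from the distance as the total variation, which for the geodesic
distance of a Riemannian metric agrees with the Riemannian length.  The `d`-dimensional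
Riemannian volume is encoded as the `d`-dimensional Hausdorff measure (with the normalization
constant `ω_d/2^d` making it agree with the Riemannian volume on `d`-dimensional Riemannian
submanifolds).
-/

open MeasureTheory Metric Set
open scoped ENNReal

noncomputable section

/-- The length (total variation, i.e. arclength) of a path in an (extended) metric space.
For a path in a Riemannian manifold, computing it with respect to the geodesic distance
gives the Riemannian length of the path. -/
def pathLength {X : Type} [PseudoEMetricSpace X] {x y : X} (γ : Path x y) : ℝ≥0∞ :=
  eVariationOn (fun t => γ t) Set.univ

/-- A metric is a length (intrinsic) metric: the distance between two points is the infimum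
of the lengths of paths joining them.  The geodesic distance of a Riemannian metric is a
length metric. -/
def IsLengthMetric (X : Type) [PseudoEMetricSpace X] : Prop :=
  ∀ x y : X, edist x y = ⨅ γ : Path x y, pathLength γ

/-- The systole of a space: the infimum of the lengths of all non-contractible closed curves. -/
def systole (X : Type) [PseudoEMetricSpace X] : ℝ≥0∞ :=
  ⨅ (x : X) (γ : Path x x) (_ : ¬γ.Homotopic (Path.refl x)), pathLength γ

/-- The volume `ω_d = π^(d/2)/Γ(d/2+1)` of the Euclidean unit ball in dimension `d`. -/
def unitBallVolume (d : ℕ) : ℝ≥0∞ :=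
  ENNReal.ofReal (Real.pi ^ ((d : ℝ) / 2) / Real.Gamma ((d : ℝ) / 2 + 1))

/-- The `d`-dimensional Riemannian volume of a subset of a metric space: the `d`-dimensional
Hausdorff measure, normalized (à la Federer, by `ω_d/2^d`) so that it agrees with the
Riemannian volume on `d`-dimensional Riemannian manifolds and their `d`-dimensional
submanifolds. -/
def rvol (d : ℕ) {X : Type} [EMetricSpace X] [MeasurableSpace X] [BorelSpace X]
    (s : Set X) : ℝ≥0∞ :=
  (unitBallVolume d / 2 ^ d) * μH[(d : ℝ)] s

/-- The standard topological `n`-torus `(ℝ/ℤ)ⁿ`. -/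
abbrev Torus (n : ℕ) : Type := Fin n → AddCircle (1 : ℝ)

/-!
Following Guth, a space whose balls of radius `R` all have small `n`-dimensional measure is covered
by `n` families of pairwise disjoint open sets of radius `R`. This goes by induction on `n`: among
the closed sets cutting the space into disjoint open pieces of radius `R`, take one, `W`, of almost
minimal `(n - 1)`-dimensional measure. Exchanging `W` inside a ball for a sphere, whose measure is
small by Eilenberg's inequality, shows that `W` has small balls as well, and `W` is covered by
`n - 1` families.

On the torus, if `2R` is at most the systole, such a cover needs more than `n` families. The center
of a piece has a unique lift to `ℝⁿ` near each lift of a point of the piece, and averaging these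
lifts with a partition of unity subordinate to the families gives a `C¹` map `f : ℝⁿ → ℝⁿ`
commuting with integer translations. With `n` families, the differential of `f` has rank less than
`n` everywhere, because the partition functions sum to one. But the determinant of the differential
has mean `1` over the unit cube, as `f` is the identity plus a periodic map.
-/

section Degree

open Module Polynomial

lemma integral_eval_eq_of_infinite {α : Type*} [MeasurableSpace α] {μ : Measure α} {p : α → ℝ[X]}
    {d : ℕ} (hdeg : ∀ x, (p x).natDegree ≤ d) (hint : ∀ t, Integrable (fun x ↦ (p x).eval t) μ)
    {S : Set ℝ} (hS : S.Infinite) {c : ℝ} (hc : ∀ t ∈ S, ∫ x, (p x).eval t ∂μ = c) (a : ℝ) :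
    ∫ x, (p x).eval a ∂μ = c := by
  obtain ⟨s, hsS, hs⟩ := hS.exists_subset_card_eq (d + 1)
  have hinj : InjOn id (s : Set ℝ) := injOn_id _
  have hexpand (x : α) :
      (p x).eval a = ∑ t ∈ s, (p x).eval t * (Lagrange.basis s id t).eval a := by
    have hdeg' : (p x).degree < s.card := degree_le_natDegree.trans_lt <| by
      rw [hs]; exact_mod_cast Nat.lt_succ_of_le (hdeg x)
    conv_lhs => rw [Lagrange.eq_interpolate hinj hdeg', Lagrange.interpolate_apply]
    simp [eval_finsetSum]
  have hsum : ∑ t ∈ s, (Lagrange.basis s id t).eval a = 1 := by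
    rw [← eval_finsetSum, Lagrange.sum_basis hinj (Finset.card_pos.1 (by omega)), eval_one]
  calc ∫ x, (p x).eval a ∂μ
      = ∑ t ∈ s, (∫ x, (p x).eval t ∂μ) * (Lagrange.basis s id t).eval a := by
        simp_rw [hexpand]
        rw [integral_finsetSum _ fun t _ ↦ (hint t).mul_const _]
        simp_rw [integral_mul_const]
    _ = ∑ t ∈ s, c * (Lagrange.basis s id t).eval a :=
        Finset.sum_congr rfl fun t ht ↦ by rw [hc t (hsS ht)]
    _ = c := by rw [← Finset.mul_sum, hsum, mul_one]

lemma exists_polynomial_eval_eq_det_one_add_smul {K V : Type*} [Field K] [AddCommGroup V]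
    [Module K V] [FiniteDimensional K V] (A : V →ₗ[K] V) :
    ∃ p : K[X], p.natDegree ≤ finrank K V ∧ ∀ t, p.eval t = LinearMap.det (1 + t • A) := by
  let b := finBasis K V
  let B := LinearMap.toMatrix b b A
  have hdeg := natDegree_det_X_add_C_le B 1
  rw [Fintype.card_fin] at hdeg
  refine ⟨_, hdeg, fun t ↦ ?_⟩
  rw [← LinearMap.det_toMatrix b, map_add, map_smul, LinearMap.toMatrix_one, ← coe_evalRingHom,
    RingHom.map_det]
  congr 1
  ext i j
  simp [B, Matrix.one_apply, add_comm, mul_comm t, apply_ite (eval t)]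

variable {E : Type*} [NormedAddCommGroup E] [NormedSpace ℝ E] [FiniteDimensional ℝ E]

lemma det_one_add_pos_of_norm_lt_one {A : E →L[ℝ] E} (hA : ‖A‖ < 1) : 0 < (1 + A).det := by
  have hne (t : ℝ) (ht : t ∈ Icc (0 : ℝ) 1) : (1 + t • A).det ≠ 0 := by
    have hnorm : ‖-(t • A)‖ < 1 := by
      rw [norm_neg, norm_smul, Real.norm_of_nonneg ht.1]
      exact (mul_le_of_le_one_left (norm_nonneg _) ht.2).trans_lt hA
    have hunit := isUnit_one_sub_of_norm_lt_one hnorm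
    rw [sub_neg_eq_add] at hunit
    exact ((hunit.map ContinuousLinearMap.toLinearMapRingHom).map
      LinearMap.det).ne_zero
  by_contra! hneg
  have hcont : Continuous fun t : ℝ ↦ (1 + t • A).det :=
    ContinuousLinearMap.continuous_det.comp (by fun_prop)
  obtain ⟨t, ht, ht0⟩ := intermediate_value_Icc' zero_le_one hcont.continuousOn
    (show (0 : ℝ) ∈ Icc _ _ from ⟨by simpa using hneg, by simp [ContinuousLinearMap.det]⟩)
  exact hne t ht ht0

lemma exists_homeomorph_add_of_lipschitzWith {u : E → E} {c : NNReal} (hu : LipschitzWith c u)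
    (hc : c < 1) : ∃ F : E ≃ₜ E, ∀ x, F x = x + u x := by
  have happrox : ApproximatesLinearOn (fun x ↦ x + u x)
      (ContinuousLinearEquiv.refl ℝ E : E →L[ℝ] E) univ c := fun x _ y _ ↦ by
    simpa [add_sub_add_comm] using lipschitzWith_iff_norm_sub_le.1 hu x y
  refine ⟨happrox.toHomeomorph _ ?_, fun x ↦ rfl⟩
  rcases subsingleton_or_nontrivial E with h | h
  · exact .inl h
  · refine .inr (hc.trans_eq ?_)
    have := ContinuousLinearMap.nnnorm_id (𝕜 := ℝ) (E := E)
    simp [this]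

lemma measure_image_eq_of_existsUnique_vadd_mem {G α : Type*} [AddGroup G] [Countable G]
    [AddAction G α] [MeasurableSpace α] [MeasurableConstVAdd G α] {μ : Measure α}
    [VAddInvariantMeasure G α μ] {s : Set α} (hs : MeasurableSet s)
    (hs' : ∀ x, ∃! g : G, g +ᵥ x ∈ s) (F : α ≃ᵐ α) (hF : ∀ (g : G) x, F (g +ᵥ x) = g +ᵥ F x) :
    μ (F '' s) = μ s := by
  have himage : IsAddFundamentalDomain G (F '' s) μ := by
    refine .mk' (F.measurableEmbedding.measurableSet_image.2 hs).nullMeasurableSet fun y ↦ ?_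
    obtain ⟨x, rfl⟩ := F.surjective y
    simpa only [← hF, F.injective.mem_set_image] using hs' x
  exact himage.measure_eq (.mk' hs.nullMeasurableSet hs')

variable {ι : Type*} (b : Basis ι ℝ E)

lemma setIntegral_fundamentalDomain_det_one_add_fderiv_of_bound [MeasurableSpace E] [BorelSpace E]
    (μ : Measure E) [μ.IsAddHaarMeasure] {u : E → E} (hu : Differentiable ℝ u)
    (hper : ∀ x, ∀ v ∈ Submodule.span ℤ (range b), u (x + v) = u x)
    {c : NNReal} (hc : c < 1) (hbound : ∀ x, ‖fderiv ℝ u x‖₊ ≤ c) :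
    ∫ x in ZSpan.fundamentalDomain b, (1 + fderiv ℝ u x).det ∂μ =
      μ.real (ZSpan.fundamentalDomain b) := by
  have : Finite ι := Finite.finite_basis b
  have hmeas := ZSpan.fundamentalDomain_measurableSet b
  obtain ⟨F, hF⟩ :=
    exists_homeomorph_add_of_lipschitzWith (lipschitzWith_of_nnnorm_fderiv_le hu hbound) hc
  have hF' (x : E) : HasFDerivAt F (1 + fderiv ℝ u x) x := by
    rw [funext hF]
    exact (hasFDerivAt_id x).add (hu x).hasFDerivAt
  have hpos (x : E) : |(1 + fderiv ℝ u x).det| = (1 + fderiv ℝ u x).det :=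
    abs_of_pos (det_one_add_pos_of_norm_lt_one ((hbound x).trans_lt hc))
  let L := Submodule.span ℤ (range b)
  have : VAddInvariantMeasure L E μ := ⟨fun v s _ ↦ measure_preimage_add μ (v : E) s⟩
  have : MeasurableConstVAdd L E := ⟨fun v ↦ measurable_const_add (v : E)⟩
  have hvol : μ (F '' ZSpan.fundamentalDomain b) = μ (ZSpan.fundamentalDomain b) := by
    refine measure_image_eq_of_existsUnique_vadd_mem (G := L) hmeas
      (ZSpan.exist_unique_vadd_mem_fundamentalDomain b) F.toMeasurableEquiv fun v x ↦ ?_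
    have hv : u (v + x) = u x := by rw [add_comm, hper x v v.2]
    simp [Submodule.vadd_def, hF, hv, add_assoc]
  have hchange := integral_image_eq_integral_abs_det_fderiv_smul μ hmeas
    (fun x _ ↦ (hF' x).hasFDerivWithinAt) F.injective.injOn (fun _ ↦ (1 : ℝ))
  simpa [hpos, measureReal_def, hvol, eq_comm] using hchange

lemma exists_nnnorm_fderiv_le_of_periodic {F : Type*} [NormedAddCommGroup F] [NormedSpace ℝ F]
    {u : E → F} (hu : ContDiff ℝ 1 u)
    (hper : ∀ x, ∀ v ∈ Submodule.span ℤ (range b), u (x + v) = u x) :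
    ∃ K, ∀ x, ‖fderiv ℝ u x‖₊ ≤ K := by
  have : Finite ι := Finite.finite_basis b
  have hper' (x v : E) (hv : v ∈ Submodule.span ℤ (range b)) :
      fderiv ℝ u (x + v) = fderiv ℝ u x := by
    rw [← fderiv_comp_add_right v, funext fun y ↦ hper y v hv]
  obtain ⟨K, hK⟩ := (IsZLattice.isCompact_range_of_periodic _ _
    (hu.continuous_fderiv one_ne_zero) hper').isBounded.exists_norm_le
  exact ⟨K.toNNReal, fun x ↦ NNReal.le_toNNReal_of_coe_le (hK _ (mem_range_self x))⟩

-- Both sides with `u` replaced by `t • u` are polynomials in `t`, which agree for small `t`.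
lemma setIntegral_fundamentalDomain_det_one_add_fderiv [MeasurableSpace E] [BorelSpace E]
    (μ : Measure E) [μ.IsAddHaarMeasure] {u : E → E} (hu : ContDiff ℝ 1 u)
    (hper : ∀ x, ∀ v ∈ Submodule.span ℤ (range b), u (x + v) = u x) :
    ∫ x in ZSpan.fundamentalDomain b, (1 + fderiv ℝ u x).det ∂μ =
      μ.real (ZSpan.fundamentalDomain b) := by
  have : Finite ι := Finite.finite_basis b
  have hdiff : Differentiable ℝ u := hu.differentiable one_ne_zero
  obtain ⟨K, hK⟩ := exists_nnnorm_fderiv_le_of_periodic b hu hper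
  choose p hdeg hp using fun x ↦
    exists_polynomial_eval_eq_det_one_add_smul (fderiv ℝ u x).toLinearMap
  have hp' (x : E) (t : ℝ) : (p x).eval t = (1 + t • fderiv ℝ u x).det := hp x t
  have hint (t : ℝ) :
      IntegrableOn (fun x ↦ (p x).eval t) (ZSpan.fundamentalDomain b) μ := by
    have hcont : Continuous fun x ↦ (p x).eval t := by
      simp_rw [hp']
      have := hu.continuous_fderiv one_ne_zero
      exact ContinuousLinearMap.continuous_det.comp (by fun_prop)
    exact (hcont.continuousOn.integrableOn_compact
      (ZSpan.fundamentalDomain_isBounded b).isCompact_closure).mono_set subset_closure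
  have hsmall (t : ℝ) (ht : t ∈ Ioo 0 (1 / (K + 1 : ℝ))) :
      ∫ x in ZSpan.fundamentalDomain b, (p x).eval t ∂μ = μ.real (ZSpan.fundamentalDomain b) := by
    have hfderiv (x : E) : fderiv ℝ (t • u) x = t • fderiv ℝ u x :=
      fderiv_const_smul (hdiff x) t
    have htK : ‖t‖₊ * K < 1 := by
      rw [← NNReal.coe_lt_coe]
      have := (lt_div_iff₀ (by positivity)).1 ht.2
      simp only [NNReal.coe_mul, coe_nnnorm, Real.norm_of_nonneg ht.1.le, NNReal.coe_one]
      linarith [ht.1]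
    rw [← setIntegral_fundamentalDomain_det_one_add_fderiv_of_bound b μ (hdiff.const_smul t)
      (fun x v hv ↦ by simp [hper x v hv]) htK fun x ↦ ?_]
    · simp_rw [hp', hfderiv]
    · rw [hfderiv, nnnorm_smul]
      gcongr
      exact hK x
  have hone := integral_eval_eq_of_infinite hdeg hint (Ioo_infinite (by positivity)) hsmall 1
  simpa only [hp', one_smul] using hone

lemma exists_det_fderiv_ne_zero {f : E → E} (hf : ContDiff ℝ 1 f)
    (hper : ∀ x, ∀ v ∈ Submodule.span ℤ (range b), f (x + v) = f x + v) :
    ∃ x, (fderiv ℝ f x).det ≠ 0 := by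
  borelize E
  have : Finite ι := Finite.finite_basis b
  by_contra! hzero
  have hfderiv (x : E) : fderiv ℝ f x = 1 + fderiv ℝ (fun y ↦ f y - id y) x := by
    rw [fderiv_fun_sub (hf.differentiable one_ne_zero x) differentiableAt_id, fderiv_id]
    exact (add_sub_cancel _ _).symm
  have hvol := setIntegral_fundamentalDomain_det_one_add_fderiv b Measure.addHaar
    (hf.sub contDiff_id) fun x v hv ↦ by simp [hper x v hv]
  have hne := ENNReal.toReal_ne_zero.2 ⟨ZSpan.measure_fundamentalDomain_ne_zero b
    (μ := Measure.addHaar), (ZSpan.fundamentalDomain_isBounded b).measure_lt_top.ne⟩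
  simp_rw [← hfderiv, hzero, integral_zero] at hvol
  exact hne hvol.symm

end Degree

section RankObstruction

open Module

lemma det_sum_smulRight_eq_zero {K V κ : Type*} [Field K] [AddCommGroup V] [Module K V]
    [FiniteDimensional K V] [Fintype κ] [Nonempty κ] (hcard : Fintype.card κ ≤ finrank K V)
    {φ : κ → V →ₗ[K] K} (hφ : ∑ k, φ k = 0) (c : κ → V) :
    LinearMap.det (∑ k, (φ k).smulRight (c k)) = 0 := by
  classical
  let k₀ : κ := Classical.arbitrary κ
  let Φ : V →ₗ[K] ({k // k ≠ k₀} → K) := LinearMap.pi fun k ↦ φ k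
  obtain ⟨v, hv, hv0⟩ := (Submodule.ne_bot_iff _).1 <|
    LinearMap.ker_ne_bot_of_finrank_lt (f := Φ) <| by
      have := Fintype.card_pos (α := κ)
      rw [finrank_fintype_fun_eq_card, Fintype.card_subtype_compl, Fintype.card_subtype_eq]
      omega
  have hne (k : κ) (hk : k ≠ k₀) : φ k v = 0 := congrFun hv ⟨k, hk⟩
  have hφv (k : κ) : φ k v = 0 := by
    obtain rfl | hk := eq_or_ne k k₀
    · rw [← Fintype.sum_eq_single _ hne, ← LinearMap.sum_apply, hφ, LinearMap.zero_apply]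
    · exact hne k hk
  refine LinearMap.det_eq_zero_iff_ker_ne_bot.2 <| (Submodule.ne_bot_iff _).2 ⟨v, ?_, hv0⟩
  simp [hφv]

lemma sum_smul_eventuallyEq_of_locallyConstant {X V κ : Type*} [TopologicalSpace X]
    [AddCommGroup V] [Module ℝ V] [Fintype κ] {ψ : κ → X → ℝ} {s : κ → X → V} {x : X}
    (hs : ∀ k, x ∈ tsupport (ψ k) → ∀ᶠ z in nhds x, s k z = s k x) :
    (fun z ↦ ∑ k, ψ k z • s k z) =ᶠ[nhds x] fun z ↦ ∑ k, ψ k z • s k x := by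
  have hterm (k : κ) : ∀ᶠ z in nhds x, ψ k z • s k z = ψ k z • s k x := by
    by_cases hx : x ∈ tsupport (ψ k)
    · filter_upwards [hs k hx] with z hz
      rw [hz]
    · filter_upwards [notMem_tsupport_iff_eventuallyEq.1 hx] with z hz
      simp [hz]
  filter_upwards [Filter.eventually_all.2 hterm] with z hz
  exact Finset.sum_congr rfl fun k _ ↦ hz k

lemma finrank_lt_card_of_equivariant_locallyConstant {E ι κ : Type*} [NormedAddCommGroup E]
    [NormedSpace ℝ E] [FiniteDimensional ℝ E] [Fintype κ] (b : Basis ι ℝ E)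
    {ψ : κ → E → ℝ} (hψ : ∀ k, ContDiff ℝ 1 (ψ k)) (hsum : ∀ y, ∑ k, ψ k y = 1)
    (hψper : ∀ k y, ∀ v ∈ Submodule.span ℤ (range b), ψ k (y + v) = ψ k y)
    {s : κ → E → E} (hs : ∀ k, ∀ y ∈ tsupport (ψ k), ∀ᶠ z in nhds y, s k z = s k y)
    (hsper : ∀ k, ∀ y ∈ tsupport (ψ k), ∀ v ∈ Submodule.span ℤ (range b),
      s k (y + v) = s k y + v) :
    finrank ℝ E < Fintype.card κ := by
  by_contra! hcard
  have : Nonempty κ := by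
    by_contra hκ
    rw [not_nonempty_iff] at hκ
    simpa using hsum 0
  have hψd (k : κ) (y : E) : DifferentiableAt ℝ (ψ k) y := (hψ k).differentiable one_ne_zero y
  let f : E → E := fun y ↦ ∑ k, ψ k y • s k y
  have hf_near (y : E) : f =ᶠ[nhds y] fun z ↦ ∑ k, ψ k z • s k y :=
    sum_smul_eventuallyEq_of_locallyConstant fun k ↦ hs k y
  have hf : ContDiff ℝ 1 f := contDiff_iff_contDiffAt.2 fun y ↦
    ContDiffAt.congr_of_eventuallyEq (by fun_prop) (hf_near y)
  have hfper (y v : E) (hv : v ∈ Submodule.span ℤ (range b)) : f (y + v) = f y + v := by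
    have hterm (k : κ) : ψ k (y + v) • s k (y + v) = ψ k y • s k y + ψ k y • v := by
      rw [hψper k y v hv]
      by_cases hy : y ∈ tsupport (ψ k)
      · rw [hsper k y hy v hv, smul_add]
      · simp [image_eq_zero_of_notMem_tsupport hy]
    simp only [f, hterm, Finset.sum_add_distrib, ← Finset.sum_smul, hsum, one_smul]
  obtain ⟨y, hy⟩ := exists_det_fderiv_ne_zero b hf hfper
  have hsum' : ∑ k, (fderiv ℝ (ψ k) y : E →ₗ[ℝ] ℝ) = 0 := by
    have h := (HasFDerivAt.fun_sum fun k _ ↦ (hψd k y).hasFDerivAt (𝕜 := ℝ)).unique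
      ((hasFDerivAt_const (1 : ℝ) y).congr_of_eventuallyEq (.of_forall hsum))
    ext v
    simpa using DFunLike.congr_fun h v
  have hf' : (fderiv ℝ f y : E →ₗ[ℝ] E) =
      ∑ k, (fderiv ℝ (ψ k) y : E →ₗ[ℝ] ℝ).smulRight (s k y) := by
    rw [(hf_near y).fderiv_eq, fderiv_fun_sum fun k _ ↦ (hψd k y).smul_const _]
    ext v
    simp [fderiv_smul_const (hψd _ y)]
  exact hy (by rw [ContinuousLinearMap.det, hf', det_sum_smulRight_eq_zero hcard hsum'])

end RankObstruction

section PartitionOfUnity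

open scoped Manifold ContDiff

lemma exists_contDiff_partition_of_isClosedEmbedding {X F κ : Type*} [TopologicalSpace X]
    [NormedAddCommGroup F] [NormedSpace ℝ F] [FiniteDimensional ℝ F] [Fintype κ] {j : X → F}
    (hj : Topology.IsClosedEmbedding j) {O : κ → Set X} (hO : ∀ k, IsOpen (O k))
    (hcov : ⋃ k, O k = univ) :
    ∃ ρ : κ → F → ℝ, (∀ k, ContDiff ℝ ∞ (ρ k)) ∧ (∀ x, ∑ k, ρ k (j x) = 1) ∧
      ∀ k, j ⁻¹' tsupport (ρ k) ⊆ O k := by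
  choose O' hO' hO'O using fun k ↦ hj.isInducing.isOpen_iff.1 (hO k)
  have hcov' : range j ⊆ ⋃ k, O' k := by
    rw [range_subset_iff]
    simpa [eq_univ_iff_forall, ← hO'O] using hcov
  obtain ⟨ρ, hρ⟩ :=
    SmoothPartitionOfUnity.exists_isSubordinate 𝓘(ℝ, F) hj.isClosed_range O' hO' hcov'
  refine ⟨fun k ↦ ρ k, fun k ↦ (ρ k).contMDiff.contDiff, fun x ↦ ?_, fun k ↦ ?_⟩
  · rw [← finsum_eq_sum_of_fintype]
    exact ρ.sum_eq_one (mem_range_self x)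
  · rw [← hO'O]
    exact preimage_mono (hρ k)

end PartitionOfUnity

section Torus

open scoped ContDiff

variable {n : ℕ}

/-- The projection `ℝⁿ → (ℝ/ℤ)ⁿ`, the universal cover of the torus, as a group homomorphism. -/
def torusMk (n : ℕ) : (Fin n → ℝ) →+ Torus n :=
  (QuotientAddGroup.mk' (AddSubgroup.zmultiples (1 : ℝ))).compLeft (Fin n)

lemma ker_torusMk (n : ℕ) :
    (torusMk n).ker = (Submodule.span ℤ (range (Pi.basisFun ℝ (Fin n)))).toAddSubgroup := by
  ext v
  have hcoord : torusMk n v = 0 ↔ ∀ i, ((v i : ℝ) : AddCircle (1 : ℝ)) = 0 := funext_iff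
  rw [AddMonoidHom.mem_ker, hcoord]
  simp [Module.Basis.mem_span_iff_repr_mem, AddSubgroup.mem_zmultiples_iff]

lemma torusMk_add_of_mem_span {v : Fin n → ℝ}
    (hv : v ∈ Submodule.span ℤ (range (Pi.basisFun ℝ (Fin n)))) (y : Fin n → ℝ) :
    torusMk n (y + v) = torusMk n y := by
  have hv' : v ∈ (torusMk n).ker := by rwa [ker_torusMk]
  rw [map_add, AddMonoidHom.mem_ker.1 hv', add_zero]

lemma isCoveringMap_torusMk (n : ℕ) : IsCoveringMap (torusMk n) := by
  have hquot : Topology.IsQuotientMap (torusMk n) :=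
    (IsOpenQuotientMap.piMap fun _ ↦ QuotientAddGroup.isOpenQuotientMap_mk).isQuotientMap
  refine (hquot.isAddQuotientCoveringMap_of_isDiscrete_ker_addMonoidHom ?_).isCoveringMap
  rw [ker_torusMk]
  exact ⟨ZSpan.discreteTopology_pi_basisFun⟩

/-- The embedding of `(ℝ/ℤ)ⁿ` into `ℂⁿ` as a product of unit circles, which transfers smooth
partitions of unity from `ℂⁿ` to the torus. -/
def torusToComplex (n : ℕ) (x : Torus n) : Fin n → ℂ := fun i ↦ AddCircle.toCircle (x i)

lemma isClosedEmbedding_torusToComplex (n : ℕ) :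
    Topology.IsClosedEmbedding (torusToComplex n) := by
  refine Continuous.isClosedEmbedding ?_ fun x y hxy ↦ funext fun i ↦ ?_
  · have := AddCircle.continuous_toCircle (T := (1 : ℝ))
    unfold torusToComplex
    fun_prop
  · exact AddCircle.injective_toCircle one_ne_zero (Subtype.ext (congrFun hxy i))

lemma contDiff_torusToComplex_torusMk (n : ℕ) :
    ContDiff ℝ ∞ fun y ↦ torusToComplex n (torusMk n y) := by
  refine contDiff_pi.2 fun i ↦ ?_
  have happly (y : Fin n → ℝ) : torusToComplex n (torusMk n y) i =
      Complex.exp (Complex.ofRealCLM (2 * Real.pi / 1 * y i) * Complex.I) := by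
    rw [Complex.ofRealCLM_apply, ← Circle.coe_exp, ← AddCircle.toCircle_apply_mk]
    rfl
  simp_rw [happly]
  fun_prop

lemma exists_contDiff_periodic_partition {κ : Type*} [Fintype κ] {O : κ → Set (Torus n)}
    (hO : ∀ k, IsOpen (O k)) (hcov : ⋃ k, O k = univ) :
    ∃ ψ : κ → Torus n → ℝ, (∀ k, ContDiff ℝ 1 (ψ k ∘ torusMk n)) ∧ (∀ x, ∑ k, ψ k x = 1) ∧
      ∀ k, tsupport (ψ k ∘ torusMk n) ⊆ torusMk n ⁻¹' O k := by
  obtain ⟨ρ, hρ, hsum, hsupp⟩ :=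
    exists_contDiff_partition_of_isClosedEmbedding (isClosedEmbedding_torusToComplex n) hO hcov
  have hsmooth := contDiff_torusToComplex_torusMk n
  refine ⟨fun k ↦ ρ k ∘ torusToComplex n, fun k ↦ ((hρ k).comp hsmooth).of_le (by simp), hsum,
    fun k ↦ ?_⟩
  exact (tsupport_comp_subset_preimage (ρ k) hsmooth.continuous).trans (preimage_mono (hsupp k))

lemma lt_card_of_equivariant_locallyConstant_on_cover {κ : Type*} [Fintype κ]
    {O : κ → Set (Torus n)} (hO : ∀ k, IsOpen (O k)) (hcov : ⋃ k, O k = univ)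
    {s : κ → (Fin n → ℝ) → Fin n → ℝ}
    (hs : ∀ k y, torusMk n y ∈ O k → ∀ᶠ z in nhds y, s k z = s k y)
    (hsper : ∀ k y, torusMk n y ∈ O k → ∀ v ∈ Submodule.span ℤ (range (Pi.basisFun ℝ (Fin n))),
      s k (y + v) = s k y + v) :
    n < Fintype.card κ := by
  obtain ⟨ψ, hψ, hsum, hsupp⟩ := exists_contDiff_periodic_partition hO hcov
  simpa using finrank_lt_card_of_equivariant_locallyConstant (Pi.basisFun ℝ (Fin n)) hψ
    (fun y ↦ hsum (torusMk n y)) (fun k y v hv ↦ congrArg (ψ k) (torusMk_add_of_mem_span hv y))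
    (fun k y hy ↦ hs k y (hsupp k hy)) (fun k y hy ↦ hsper k y (hsupp k hy))

end Torus

section LiftedDistance

lemma pathLength_congr {X : Type} [PseudoEMetricSpace X] {x y x' y' : X} {γ : Path x y}
    {γ' : Path x' y'} (h : ∀ t, γ t = γ' t) : pathLength γ = pathLength γ' :=
  eVariationOn.congr fun t _ ↦ h t

lemma edist_le_pathLength {X : Type} [PseudoEMetricSpace X] {x y : X} (γ : Path x y)
    (t : unitInterval) : edist (γ t) x ≤ pathLength γ := by
  simpa [pathLength] using eVariationOn.edist_le (fun t ↦ γ t) (mem_univ t) (mem_univ 0)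

lemma pathLength_symm_le {X : Type} [PseudoEMetricSpace X] {x y : X} (γ : Path x y) :
    pathLength γ.symm ≤ pathLength γ :=
  eVariationOn.comp_le_of_antitoneOn (fun t ↦ γ t) unitInterval.symm
    (fun _ _ _ _ h ↦ unitInterval.symm_le_symm.2 h) (mapsTo_univ _ _)

lemma eVariationOn_le_of_eqOn_comp_monotone {α β X : Type*} [LinearOrder α] [LinearOrder β]
    [PseudoEMetricSpace X] {f : α → X} {g : β → X} {φ : α → β} {s : Set α} (hφ : Monotone φ)
    (h : EqOn f (g ∘ φ) s) : eVariationOn f s ≤ eVariationOn g univ := by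
  rw [eVariationOn.congr h]
  exact eVariationOn.comp_le_of_monotoneOn g φ (hφ.monotoneOn s) (mapsTo_univ _ _)

lemma pathLength_trans_le {X : Type} [PseudoEMetricSpace X] {x y z : X} (γ : Path x y)
    (γ' : Path y z) : pathLength (γ.trans γ') ≤ pathLength γ + pathLength γ' := by
  let half : unitInterval := ⟨1 / 2, by norm_num, by norm_num⟩
  have hsplit : (univ : Set unitInterval) = Iic half ∪ Ici half := Iic_union_Ici.symm
  have htrans (t : unitInterval) : γ.trans γ' t =
      if (t : ℝ) ≤ 1 / 2 then γ.extend (2 * t) else γ'.extend (2 * t - 1) := rfl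
  let double (t : unitInterval) := projIcc (0 : ℝ) 1 zero_le_one (2 * t)
  let double' (t : unitInterval) := projIcc (0 : ℝ) 1 zero_le_one (2 * t - 1)
  have hmono : Monotone double := fun a b hab ↦ monotone_projIcc _ (by gcongr)
  have hmono' : Monotone double' := fun a b hab ↦ monotone_projIcc _ (by gcongr)
  have hleft : EqOn (fun t ↦ γ.trans γ' t) ((fun t ↦ γ t) ∘ double) (Iic half) :=
    fun t ht ↦ (htrans t).trans (if_pos ht)
  have hright : EqOn (fun t ↦ γ.trans γ' t) ((fun t ↦ γ' t) ∘ double') (Ici half) := by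
    intro t ht
    obtain heq | hlt := (show (1 / 2 : ℝ) ≤ t from ht).eq_or_lt
    · calc γ.trans γ' t = y := by rw [htrans, ← heq]; simp
        _ = γ'.extend (2 * t - 1) := by rw [← heq]; simp
    · exact (htrans t).trans (if_neg hlt.not_ge)
  simp only [pathLength]
  rw [hsplit, eVariationOn.union _ isGreatest_Iic isLeast_Ici, ← hsplit]
  exact add_le_add (eVariationOn_le_of_eqOn_comp_monotone hmono hleft)
    (eVariationOn_le_of_eqOn_comp_monotone hmono' hright)

variable {E : Type*} [TopologicalSpace E] {M : Type} [PseudoEMetricSpace M] {p : C(E, M)}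

/-- The pullback along `p` of the length distance of `M`: the infimum of the lengths in `M` of the
images of paths in `E` joining two points. For a covering map `p` it separates the points of a fiber
by at least the systole of `M`. -/
def liftEDist (p : C(E, M)) (y y' : E) : ℝ≥0∞ :=
  ⨅ Γ : Path y y', pathLength (Γ.map p.continuous)

lemma liftEDist_le_symm (y y' : E) : liftEDist p y y' ≤ liftEDist p y' y :=
  le_iInf fun Γ ↦ iInf_le_of_le Γ.symm <| by
    rw [← Path.map_symm]
    exact pathLength_symm_le _

lemma liftEDist_comm (y y' : E) : liftEDist p y y' = liftEDist p y' y :=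
  (liftEDist_le_symm y y').antisymm (liftEDist_le_symm y' y)

lemma liftEDist_triangle (x y z : E) :
    liftEDist p x z ≤ liftEDist p x y + liftEDist p y z :=
  ENNReal.le_iInf_add_iInf fun Γ Γ' ↦ iInf_le_of_le (Γ.trans Γ') <| by
    rw [Path.map_trans]
    exact pathLength_trans_le _ _

lemma liftEDist_map_le {T : E → E} (hT : Continuous T) (hpT : ∀ y, p (T y) = p y) (y y' : E) :
    liftEDist p (T y) (T y') ≤ liftEDist p y y' :=
  le_iInf fun Γ ↦ iInf_le_of_le (Γ.map hT) (pathLength_congr fun t ↦ hpT (Γ t)).le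

lemma exists_liftEDist_lt (hp : IsCoveringMap p) (hM : IsLengthMetric M) {y : E} {x : M}
    {L : ℝ≥0∞} (h : edist (p y) x < L) : ∃ y', p y' = x ∧ liftEDist p y y' < L := by
  rw [hM, iInf_lt_iff] at h
  obtain ⟨γ, hγ⟩ := h
  obtain ⟨Γ, hΓ, hΓ0⟩ := hp.exists_path_lifts γ.toContinuousMap y γ.source
  have hpΓ (t : unitInterval) : p (Γ t) = γ t := congrFun hΓ t
  refine ⟨Γ 1, (hpΓ 1).trans γ.target, iInf_lt_iff.2 ⟨⟨Γ, hΓ0, rfl⟩, ?_⟩⟩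
  rwa [pathLength_congr (γ' := γ) hpΓ]

lemma eventually_liftEDist_lt (hp : IsLocalHomeomorph p) (hM : IsLengthMetric M) (y : E)
    {η : ℝ≥0∞} (hη : 0 < η) : ∀ᶠ y' in nhds y, liftEDist p y y' < η := by
  obtain ⟨φ, hy, hφ⟩ := hp y
  have hpy : p y ∈ φ.target := hφ ▸ φ.map_source hy
  obtain ⟨ρ, hρ, hball⟩ := EMetric.mem_nhds_iff.1 (φ.open_target.mem_nhds hpy)
  filter_upwards [φ.open_source.mem_nhds hy,
    p.continuous.continuousAt.eventually (Metric.eball_mem_nhds (p y) (lt_min hρ hη))]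
    with y' hy' hdist
  rw [edist_comm, hM, iInf_lt_iff] at hdist
  obtain ⟨γ, hγ⟩ := hdist
  have htarget (t : unitInterval) : γ t ∈ φ.target :=
    hball ((edist_le_pathLength γ t).trans_lt (hγ.trans_le (min_le_left _ _)))
  let Γ : Path y y' :=
    { toFun := fun t ↦ φ.symm (γ t)
      continuous_toFun := φ.continuousOn_symm.comp_continuous γ.continuous htarget
      source' := by rw [γ.source, hφ, φ.left_inv hy]
      target' := by rw [γ.target, hφ, φ.left_inv hy'] }
  have hpΓ (t : unitInterval) : p (Γ t) = γ t :=
    (congrFun hφ _).trans (φ.right_inv (htarget t))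
  refine iInf_lt_iff.2 ⟨Γ, ?_⟩
  rw [pathLength_congr (γ' := γ) hpΓ]
  exact hγ.trans_le (min_le_right _ _)

lemma eq_of_liftEDist_lt_systole (hp : IsCoveringMap p) {y y' : E} (hyy' : p y = p y')
    (h : liftEDist p y y' < systole M) : y = y' := by
  obtain ⟨Γ, hΓ⟩ := iInf_lt_iff.1 h
  let γ : Path (p y) (p y) := (Γ.map p.continuous).cast rfl hyy'
  have hnull : γ.Homotopic (Path.refl (p y)) := by
    by_contra hγ
    exact hΓ.not_ge (iInf_le_of_le (p y) (iInf₂_le γ hγ))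
  have hlift := hp.liftPath_apply_one_eq_of_homotopicRel hnull y γ.source rfl
  have hΓlift : Γ.toContinuousMap = hp.liftPath γ.toContinuousMap y γ.source :=
    hp.eq_liftPath_iff' _ |>.2 ⟨rfl, Γ.source⟩
  have hconst : ContinuousMap.const unitInterval y =
      hp.liftPath (Path.refl (p y)).toContinuousMap y rfl :=
    hp.eq_liftPath_iff' _ |>.2 ⟨rfl, rfl⟩
  rw [← hΓlift, ← hconst] at hlift
  simpa [eq_comm] using hlift

end LiftedDistance

/-- A family of pairwise disjoint open sets, each contained in a ball of radius `R`: one color class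
of an open cover by small sets. -/
structure IsSmallDisjointFamily {X : Type*} [PseudoMetricSpace X] (𝒰 : Set (Set X)) (R : ℝ) :
    Prop where
  isOpen : ∀ U ∈ 𝒰, IsOpen U
  exists_subset_ball : ∀ U ∈ 𝒰, ∃ x, U ⊆ ball x R
  pairwiseDisjoint : 𝒰.PairwiseDisjoint id

section CoverMultiplicity

lemma eq_of_liftEDist_lt_half_systole {E : Type*} [TopologicalSpace E] {M : Type}
    [PseudoEMetricSpace M] {p : C(E, M)} (hp : IsCoveringMap p) {L : ℝ≥0∞}
    (hL : 2 * L ≤ systole M) {y z z' : E} (hzz' : p z = p z') (hz : liftEDist p y z < L)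
    (hz' : liftEDist p y z' < L) : z = z' := by
  refine eq_of_liftEDist_lt_systole hp hzz' ?_
  calc liftEDist p z z' ≤ liftEDist p z y + liftEDist p y z' := liftEDist_triangle z y z'
    _ < L + L := ENNReal.add_lt_add (by rwa [liftEDist_comm]) hz'
    _ ≤ systole M := two_mul L ▸ hL

variable {M : Type} [PseudoMetricSpace M] {R : ℝ}

-- `s y` is the lift, unique because `2 * R ≤ systole M`, of the center of the piece containing
-- `p y` at distance less than `R` from `y`.
lemma IsSmallDisjointFamily.exists_equivariant_locallyConstant {E : Type*} [TopologicalSpace E]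
    {p : C(E, M)} (hp : IsCoveringMap p) (hM : IsLengthMetric M)
    (hsys : ENNReal.ofReal (2 * R) ≤ systole M) {𝒰 : Set (Set M)}
    (h𝒰 : IsSmallDisjointFamily 𝒰 R) :
    ∃ s : E → E, (∀ y, p y ∈ ⋃₀ 𝒰 → ∀ᶠ z in nhds y, s z = s y) ∧
      ∀ y, p y ∈ ⋃₀ 𝒰 → ∀ T : E → E, Continuous T → (∀ z, p (T z) = p z) → s (T y) = T (s y) := by
  rw [ENNReal.ofReal_mul zero_le_two, ENNReal.ofReal_ofNat] at hsys
  choose c hc using h𝒰.exists_subset_ball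
  have hexists (y : E) : ∃ z, ∀ U, ∀ hU : U ∈ 𝒰, p y ∈ U →
      p z = c U hU ∧ liftEDist p y z < ENNReal.ofReal R := by
    by_cases hy : p y ∈ ⋃₀ 𝒰
    · obtain ⟨U, hU, hyU⟩ := hy
      obtain ⟨z, hz⟩ := exists_liftEDist_lt hp hM (edist_lt_ofReal.2 (hc U hU hyU))
      refine ⟨z, fun U' hU' hyU' ↦ ?_⟩
      obtain rfl : U' = U := h𝒰.pairwiseDisjoint.elim_set hU' hU _ hyU' hyU
      exact hz
    · exact ⟨y, fun U hU hyU ↦ (hy ⟨U, hU, hyU⟩).elim⟩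
  choose s hs using hexists
  refine ⟨s, ?_, ?_⟩
  · rintro y ⟨U, hU, hyU⟩
    obtain ⟨hpy, hdist⟩ := hs y U hU hyU
    filter_upwards [eventually_liftEDist_lt hp.isLocalHomeomorph hM y (tsub_pos_of_lt hdist),
      p.continuous.continuousAt.eventually ((h𝒰.isOpen U hU).mem_nhds hyU)] with z hyz hzU
    obtain ⟨hpz, hdistz⟩ := hs z U hU hzU
    refine eq_of_liftEDist_lt_half_systole hp hsys (hpz.trans hpy.symm) hdistz ?_
    rw [lt_tsub_iff_right, liftEDist_comm] at hyz
    exact (liftEDist_triangle z y (s y)).trans_lt hyz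
  · rintro y ⟨U, hU, hyU⟩ T hT hpT
    obtain ⟨hpy, hdist⟩ := hs y U hU hyU
    obtain ⟨hpTy, hdistT⟩ := hs (T y) U hU ((hpT y).symm ▸ hyU)
    exact eq_of_liftEDist_lt_half_systole hp hsys (by rw [hpTy, hpT, hpy]) hdistT
      ((liftEDist_map_le hT hpT y (s y)).trans_lt hdist)

theorem lt_card_of_smallDisjointFamily_cover {n : ℕ} (e : M ≃ₜ Torus n) (hM : IsLengthMetric M)
    (hsys : ENNReal.ofReal (2 * R) ≤ systole M) {κ : Type*} [Fintype κ] {V : κ → Set (Set M)}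
    (hV : ∀ k, IsSmallDisjointFamily (V k) R) (hcov : ⋃ k, ⋃₀ V k = univ) :
    n < Fintype.card κ := by
  have hp : IsCoveringMap (e.symm ∘ torusMk n) := (isCoveringMap_torusMk n).homeomorph_comp e.symm
  let p : C(Fin n → ℝ, M) := ⟨e.symm ∘ torusMk n, hp.continuous⟩
  choose s hs hsper using fun k ↦
    (hV k).exists_equivariant_locallyConstant (p := p) hp hM hsys
  refine lt_card_of_equivariant_locallyConstant_on_cover (O := fun k ↦ e.symm ⁻¹' ⋃₀ V k)
    (fun k ↦ (isOpen_sUnion (hV k).isOpen).preimage e.symm.continuous)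
    (by rw [← preimage_iUnion, hcov, preimage_univ]) hs fun k y hy v hv ↦ ?_
  exact hsper k y hy (· + v) (continuous_add_const v)
    fun z ↦ congrArg e.symm (torusMk_add_of_mem_span hv z)

end CoverMultiplicity

section EilenbergInequality

variable {X : Type*} [EMetricSpace X] {f : X → ℝ} {K : NNReal} {d : ℝ}

lemma lintegral_tsum_indicator_closure_image_le (hf : LipschitzWith K f) (hd : 0 ≤ d)
    (E : ℕ → Set X) :
    ∫⁻ t, ∑' i, (closure (f '' E i)).indicator (fun _ ↦ ediam (E i) ^ d) t ≤
      K * ∑' i, ⨆ _ : (E i).Nonempty, ediam (E i) ^ (d + 1) := by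
  have hmeas (i : ℕ) : MeasurableSet (closure (f '' E i)) := isClosed_closure.measurableSet
  rw [lintegral_tsum fun i ↦ (measurable_const.indicator (hmeas i)).aemeasurable,
    ← ENNReal.tsum_mul_left]
  refine ENNReal.tsum_le_tsum fun i ↦ ?_
  rw [lintegral_indicator_const (hmeas i)]
  rcases (E i).eq_empty_or_nonempty with hempty | hne
  · simp [hempty]
  have hvol : volume (closure (f '' E i)) ≤ K * ediam (E i) :=
    (Real.volume_le_diam _).trans (by rw [ediam_closure]; exact hf.ediam_image_le (E i))
  calc ediam (E i) ^ d * volume (closure (f '' E i))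
      ≤ ediam (E i) ^ d * (K * ediam (E i)) := by gcongr
    _ = K * ediam (E i) ^ (d + 1) := by
      rw [ENNReal.rpow_add_of_nonneg _ _ hd zero_le_one, ENNReal.rpow_one, mul_left_comm]
    _ = K * ⨆ _ : (E i).Nonempty, ediam (E i) ^ (d + 1) := by rw [iSup_pos hne]

variable [MeasurableSpace X] [BorelSpace X] {A : Set X}

lemma exists_cover_tsum_ediam_rpow_lt (hA : μH[d] A ≠ ⊤) {r : ℝ≥0∞} (hr : 0 < r) :
    ∃ E : ℕ → Set X, A ⊆ ⋃ i, E i ∧ (∀ i, ediam (E i) ≤ r) ∧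
      ∑' i, ⨆ _ : (E i).Nonempty, ediam (E i) ^ d < μH[d] A + r := by
  have hinf : (⨅ (E : ℕ → Set X) (_ : A ⊆ ⋃ i, E i) (_ : ∀ i, ediam (E i) ≤ r),
      ∑' i, ⨆ _ : (E i).Nonempty, ediam (E i) ^ d) ≤ μH[d] A := by
    rw [Measure.hausdorffMeasure_apply]
    exact le_iSup₂_of_le r hr le_rfl
  simpa only [iInf_lt_iff, exists_prop] using hinf.trans_lt (ENNReal.lt_add_right hA hr.ne')

lemma hausdorffMeasure_inter_fiber_le_liminf {r : ℕ → ℝ≥0∞}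
    (hr : Filter.Tendsto r Filter.atTop (nhds 0)) {E : ℕ → ℕ → Set X}
    (hcov : ∀ j, A ⊆ ⋃ i, E j i) (hdiam : ∀ j i, ediam (E j i) ≤ r j) (d : ℝ) (f : X → ℝ)
    (t : ℝ) :
    μH[d] (A ∩ f ⁻¹' {t}) ≤ Filter.liminf
      (fun j ↦ ∑' i, (closure (f '' E j i)).indicator (fun _ ↦ ediam (E j i) ^ d) t)
      Filter.atTop := by
  have hfiber (j : ℕ) :
      A ∩ f ⁻¹' {t} ⊆ ⋃ i : {i // t ∈ closure (f '' E j i)}, E j i := by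
    rintro x ⟨hxA, hxt⟩
    obtain ⟨i, hi⟩ := mem_iUnion.1 (hcov j hxA)
    exact mem_iUnion.2 ⟨⟨i, subset_closure ⟨x, hi, hxt⟩⟩, hi⟩
  refine (Measure.hausdorffMeasure_le_liminf_tsum d _ r hr
    (fun j (i : {i // t ∈ closure (f '' E j i)}) ↦ E j i) (.of_forall fun j i ↦ hdiam j i)
    (.of_forall hfiber)).trans_eq ?_
  congr 1 with j
  exact tsum_subtype {i | t ∈ closure (f '' E j i)} fun i ↦ ediam (E j i) ^ d

theorem exists_measurable_hausdorffMeasure_fiber_le (hf : LipschitzWith K f) (hd : 0 ≤ d)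
    (hA : μH[d + 1] A ≠ ⊤) :
    ∃ H : ℝ → ℝ≥0∞, Measurable H ∧ (∀ t, μH[d] (A ∩ f ⁻¹' {t}) ≤ H t) ∧
      ∫⁻ t, H t ≤ K * μH[d + 1] A := by
  obtain ⟨r, -, hr_pos, hr⟩ := exists_seq_strictAnti_tendsto' (zero_lt_one' ℝ≥0∞)
  choose E hcov hdiam hsum using fun j ↦ exists_cover_tsum_ediam_rpow_lt hA (hr_pos j).1
  let g (j : ℕ) (t : ℝ) : ℝ≥0∞ :=
    ∑' i, (closure (f '' E j i)).indicator (fun _ ↦ ediam (E j i) ^ d) t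
  have hg (j : ℕ) : Measurable (g j) :=
    .tsum fun i ↦ measurable_const.indicator isClosed_closure.measurableSet
  have hg_int (j : ℕ) : ∫⁻ t, g j t ≤ K * (μH[d + 1] A + r j) :=
    (lintegral_tsum_indicator_closure_image_le hf hd (E j)).trans (by gcongr; exact (hsum j).le)
  have hlim : Filter.Tendsto (fun j ↦ K * (μH[d + 1] A + r j)) Filter.atTop
      (nhds (K * μH[d + 1] A)) := by
    simpa only [add_zero] using
      ENNReal.Tendsto.const_mul (tendsto_const_nhds.add hr) (.inr ENNReal.coe_ne_top)
  exact ⟨fun t ↦ Filter.liminf (fun j ↦ g j t) Filter.atTop, .liminf hg,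
    hausdorffMeasure_inter_fiber_le_liminf hr hcov hdiam d f,
    (lintegral_liminf_le hg).trans <|
      (Filter.liminf_le_liminf (.of_forall hg_int)).trans_eq hlim.liminf_eq⟩

lemma exists_mem_Ioo_hausdorffMeasure_fiber_le (hf : LipschitzWith K f) (hd : 0 ≤ d)
    (hA : μH[d + 1] A ≠ ⊤) {a b : ℝ} (hab : a < b) :
    ∃ t ∈ Ioo a b, μH[d] (A ∩ f ⁻¹' {t}) ≤ K * μH[d + 1] A / ENNReal.ofReal (b - a) := by
  obtain ⟨H, hH, hfiber, hH_int⟩ := exists_measurable_hausdorffMeasure_fiber_le hf hd hA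
  obtain ⟨t, ht, hHt⟩ := exists_le_setLAverage (μ := volume) (s := Ioo a b)
    (by simpa [Real.volume_Ioo] using hab) (by simp [Real.volume_Ioo]) hH.aemeasurable
  refine ⟨t, ht, (hfiber t).trans (hHt.trans ?_)⟩
  rw [setLAverage_eq, Real.volume_Ioo]
  gcongr
  exact (setLIntegral_le_lintegral _ _).trans hH_int

end EilenbergInequality

section CoveringTheorem

variable {X : Type*}

lemma IsSmallDisjointFamily.mono [PseudoMetricSpace X] {𝒰 : Set (Set X)} {r R : ℝ}
    (h𝒰 : IsSmallDisjointFamily 𝒰 r) (hr : r ≤ R) : IsSmallDisjointFamily 𝒰 R where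
  isOpen := h𝒰.isOpen
  exists_subset_ball U hU :=
    (h𝒰.exists_subset_ball U hU).imp fun _ hx ↦ hx.trans (ball_subset_ball hr)
  pairwiseDisjoint := h𝒰.pairwiseDisjoint

lemma IsSmallDisjointFamily.insert_ball [PseudoMetricSpace X] {𝒰 : Set (Set X)} {r R : ℝ}
    (h𝒰 : IsSmallDisjointFamily 𝒰 R) (x : X) (hr : r ≤ R) :
    IsSmallDisjointFamily (insert (ball x r) ((· \ closedBall x r) '' 𝒰)) R where
  isOpen := by
    rintro _ (rfl | ⟨U, hU, rfl⟩)
    exacts [isOpen_ball, (h𝒰.isOpen U hU).sdiff isClosed_closedBall]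
  exists_subset_ball := by
    rintro _ (rfl | ⟨U, hU, rfl⟩)
    · exact ⟨x, ball_subset_ball hr⟩
    · exact (h𝒰.exists_subset_ball U hU).imp fun _ hy ↦ sdiff_subset.trans hy
  pairwiseDisjoint := by
    refine .insert ?_ ?_
    · rintro _ ⟨U, hU, rfl⟩ _ ⟨U', hU', rfl⟩ hne
      exact (h𝒰.pairwiseDisjoint hU hU' (ne_of_apply_ne (· \ closedBall x r) hne)).mono
        sdiff_subset sdiff_subset
    · rintro _ ⟨U, -, rfl⟩ -
      exact disjoint_sdiff_right.mono_left ball_subset_closedBall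

/-- A closed subset `W` of `Z` whose complement in `Z` is covered by pairwise disjoint open sets
of radius `R`. Minimizing the measure of `W` is the metric analogue of choosing a minimal
hypersurface in `Z`. -/
structure IsSeparator [PseudoMetricSpace X] (Z : Set X) (R : ℝ) (W : Set X) : Prop where
  subset : W ⊆ Z
  isClosed : IsClosed W
  exists_family : ∃ 𝒰, IsSmallDisjointFamily 𝒰 R ∧ Z \ W ⊆ ⋃₀ 𝒰

lemma isSeparator_self [PseudoMetricSpace X] {Z : Set X} (hZ : IsClosed Z) (R : ℝ) :
    IsSeparator Z R Z where
  subset := subset_rfl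
  isClosed := hZ
  exists_family := ⟨∅, ⟨by simp, by simp, by simp⟩, by simp⟩

lemma IsSeparator.replace_ball [PseudoMetricSpace X] {Z W : Set X} {r R : ℝ}
    (hW : IsSeparator Z R W) (hZ : IsClosed Z) (x : X) (hr : r ≤ R) :
    IsSeparator Z R (W \ ball x r ∪ Z ∩ sphere x r) where
  subset := union_subset (sdiff_subset.trans hW.subset) inter_subset_left
  isClosed := (hW.isClosed.sdiff isOpen_ball).union (hZ.inter isClosed_sphere)
  exists_family := by
    obtain ⟨𝒰, h𝒰, hcov⟩ := hW.exists_family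
    refine ⟨_, h𝒰.insert_ball x hr, fun z ⟨hzZ, hz⟩ ↦ ?_⟩
    rcases lt_trichotomy (dist z x) r with hlt | heq | hgt
    · exact ⟨_, mem_insert _ _, hlt⟩
    · exact (hz (.inr ⟨hzZ, heq⟩)).elim
    · have hzW : z ∉ W := fun hzW ↦ hz (.inl ⟨hzW, not_lt.2 hgt.le⟩)
      obtain ⟨U, hU, hzU⟩ := hcov ⟨hzZ, hzW⟩
      exact ⟨_, mem_insert_of_mem _ ⟨U, hU, rfl⟩, hzU, not_le.2 hgt⟩

lemma IsSeparator.exists_cover_cons [PseudoMetricSpace X] {Z W : Set X} {R : ℝ}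
    (hW : IsSeparator Z R W) {n : ℕ} {V : Fin n → Set (Set X)}
    (hV : ∀ k, IsSmallDisjointFamily (V k) R) (hcov : W ⊆ ⋃ k, ⋃₀ V k) :
    ∃ V' : Fin (n + 1) → Set (Set X),
      (∀ k, IsSmallDisjointFamily (V' k) R) ∧ Z ⊆ ⋃ k, ⋃₀ V' k := by
  obtain ⟨𝒰, h𝒰, hcov𝒰⟩ := hW.exists_family
  refine ⟨Fin.cons 𝒰 V, Fin.cases h𝒰 hV, fun z hz ↦ mem_iUnion.2 ?_⟩
  by_cases hzW : z ∈ W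
  · obtain ⟨k, hk⟩ := mem_iUnion.1 (hcov hzW)
    exact ⟨k.succ, hk⟩
  · exact ⟨0, hcov𝒰 ⟨hz, hzW⟩⟩

variable [MetricSpace X] [MeasurableSpace X] [BorelSpace X] {Z W : Set X} {R d : ℝ} {δ : ℝ≥0∞}

lemma exists_sphere_hausdorffMeasure_le (hR : 0 < R) (hd : 0 ≤ d) {x : X} {m : ℝ}
    (hZ : μH[d + 1] (Z ∩ ball x R) ≤ ENNReal.ofReal m) :
    ∃ r ∈ Ioo (R / 2) R, μH[d] (Z ∩ sphere x r) ≤ ENNReal.ofReal (m / (R / 2)) := by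
  obtain ⟨r, hr, hfiber⟩ := exists_mem_Ioo_hausdorffMeasure_fiber_le (LipschitzWith.dist_left x)
    hd (ne_top_of_le_ne_top ENNReal.ofReal_ne_top hZ) (half_lt_self hR)
  refine ⟨r, hr, ?_⟩
  have hsphere : Z ∩ sphere x r ⊆ Z ∩ ball x R ∩ (dist · x) ⁻¹' {r} :=
    fun z ⟨hzZ, hzr⟩ ↦ ⟨⟨hzZ, (mem_sphere.1 hzr).trans_lt hr.2⟩, hzr⟩
  calc μH[d] (Z ∩ sphere x r)
      ≤ μH[d + 1] (Z ∩ ball x R) / ENNReal.ofReal (R / 2) := by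
        simpa only [ENNReal.coe_one, one_mul, sub_half] using (measure_mono hsphere).trans hfiber
    _ ≤ ENNReal.ofReal m / ENNReal.ofReal (R / 2) := by gcongr
    _ = ENNReal.ofReal (m / (R / 2)) := (ENNReal.ofReal_div_of_pos (half_pos hR)).symm

lemma exists_isSeparator_inter_biUnion_ball_ne_top (hZ : IsClosed Z) (hδ : δ ≠ ⊤)
    (hsphere : ∀ x, ∃ r ∈ Ioo (R / 2) R, μH[d] (Z ∩ sphere x r) ≤ δ) (F : Finset X) :
    ∃ W, IsSeparator Z R W ∧ μH[d] (W ∩ ⋃ x ∈ F, ball x (R / 2)) ≠ ⊤ := by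
  classical
  induction F using Finset.induction_on with
  | empty => exact ⟨Z, isSeparator_self hZ R, by simp⟩
  | insert x F _ ih =>
    obtain ⟨W, hW, hW_fin⟩ := ih
    obtain ⟨r, hr, hδr⟩ := hsphere x
    refine ⟨_, hW.replace_ball hZ x hr.2.le, ?_⟩
    have hsub : (W \ ball x r ∪ Z ∩ sphere x r) ∩ (⋃ y ∈ insert x F, ball y (R / 2)) ⊆
        W ∩ (⋃ y ∈ F, ball y (R / 2)) ∪ Z ∩ sphere x r := by
      rw [Finset.set_biUnion_insert]
      rintro z ⟨⟨hzW, hzr⟩ | hz, hzx | hzF⟩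
      · exact (hzr (ball_subset_ball hr.1.le hzx)).elim
      · exact .inl ⟨hzW, hzF⟩
      all_goals exact .inr hz
    exact ne_top_of_le_ne_top (ENNReal.add_ne_top.2 ⟨hW_fin, ne_top_of_le_ne_top hδ hδr⟩)
      ((measure_mono hsub).trans (measure_union_le _ _))

lemma exists_isSeparator_ne_top (hZ : IsCompact Z) (hR : 0 < R) (hδ : δ ≠ ⊤)
    (hsphere : ∀ x, ∃ r ∈ Ioo (R / 2) R, μH[d] (Z ∩ sphere x r) ≤ δ) :
    ∃ W, IsSeparator Z R W ∧ μH[d] W ≠ ⊤ := by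
  obtain ⟨F, -, hF⟩ := hZ.elim_nhds_subcover (ball · (R / 2))
    fun x _ ↦ ball_mem_nhds x (half_pos hR)
  obtain ⟨W, hW, hW_fin⟩ :=
    exists_isSeparator_inter_biUnion_ball_ne_top hZ.isClosed hδ hsphere F
  exact ⟨W, hW, by rwa [inter_eq_left.2 (hW.subset.trans hF)] at hW_fin⟩

lemma exists_isSeparator_le_add (hfin : ∃ W, IsSeparator Z R W ∧ μH[d] W ≠ ⊤) (hδ : δ ≠ 0) :
    ∃ W, IsSeparator Z R W ∧ μH[d] W ≠ ⊤ ∧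
      ∀ W', IsSeparator Z R W' → μH[d] W ≤ μH[d] W' + δ := by
  obtain ⟨W₀, hW₀, hW₀_fin⟩ := hfin
  have hinf : ⨅ (W) (_ : IsSeparator Z R W), μH[d] W ≠ ⊤ :=
    ne_top_of_le_ne_top hW₀_fin (iInf₂_le W₀ hW₀)
  obtain ⟨W, hW, hWlt⟩ : ∃ W, ∃ _ : IsSeparator Z R W,
      μH[d] W < (⨅ (W) (_ : IsSeparator Z R W), μH[d] W) + δ := by
    simpa only [iInf_lt_iff] using ENNReal.lt_add_right hinf hδ
  refine ⟨W, hW, hWlt.ne_top, fun W' hW' ↦ hWlt.le.trans ?_⟩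
  gcongr
  exact iInf₂_le W' hW'

-- Otherwise replacing the part of `W` inside `ball x r` by `Z ∩ sphere x r` would decrease its
-- measure by more than `δ`.
lemma IsSeparator.hausdorffMeasure_inter_ball_le (hW : IsSeparator Z R W) (hZ : IsClosed Z)
    (hW_fin : μH[d] W ≠ ⊤) (hmin : ∀ W', IsSeparator Z R W' → μH[d] W ≤ μH[d] W' + δ) (x : X)
    {r : ℝ} (hr : r ≤ R) :
    μH[d] (W ∩ ball x r) ≤ μH[d] (Z ∩ sphere x r) + δ := by
  have hfin : μH[d] (W \ ball x r) ≠ ⊤ :=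
    ne_top_of_le_ne_top hW_fin (measure_mono sdiff_subset)
  refine (ENNReal.add_le_add_iff_left hfin).1 ?_
  calc μH[d] (W \ ball x r) + μH[d] (W ∩ ball x r)
      = μH[d] W := by rw [add_comm, measure_inter_add_sdiff W measurableSet_ball]
    _ ≤ μH[d] (W \ ball x r ∪ Z ∩ sphere x r) + δ := hmin _ (hW.replace_ball hZ x hr)
    _ ≤ μH[d] (W \ ball x r) + μH[d] (Z ∩ sphere x r) + δ := by
      gcongr
      exact measure_union_le _ _
    _ = μH[d] (W \ ball x r) + (μH[d] (Z ∩ sphere x r) + δ) := add_assoc _ _ _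

lemma exists_isSeparator_hausdorffMeasure_inter_ball_le (hZ : IsCompact Z) (hR : 0 < R)
    (hd : 0 ≤ d) {m : ℝ} (hm : 0 < m)
    (hball : ∀ x, μH[d + 1] (Z ∩ ball x R) ≤ ENNReal.ofReal m) :
    ∃ W, IsSeparator Z R W ∧
      ∀ x, μH[d] (W ∩ ball x (R / 2)) ≤ ENNReal.ofReal (4 * m / R) := by
  have hsphere (x : X) := exists_sphere_hausdorffMeasure_le hR hd (hball x)
  obtain ⟨W, hW, hW_fin, hmin⟩ := exists_isSeparator_le_add
    (exists_isSeparator_ne_top hZ hR ENNReal.ofReal_ne_top hsphere)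
    (ENNReal.ofReal_pos.2 (by positivity : 0 < m / (R / 2))).ne'
  refine ⟨W, hW, fun x ↦ ?_⟩
  obtain ⟨r, hr, hδr⟩ := hsphere x
  calc μH[d] (W ∩ ball x (R / 2))
      ≤ μH[d] (W ∩ ball x r) := by gcongr; exact hr.1.le
    _ ≤ μH[d] (Z ∩ sphere x r) + ENNReal.ofReal (m / (R / 2)) :=
      hW.hausdorffMeasure_inter_ball_le hZ.isClosed hW_fin hmin x hr.2.le
    _ ≤ ENNReal.ofReal (m / (R / 2)) + ENNReal.ofReal (m / (R / 2)) := by gcongr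
    _ = ENNReal.ofReal (4 * m / R) := by
      rw [← ENNReal.ofReal_add (by positivity) (by positivity)]
      congr 1
      field_simp
      norm_num

lemma eq_empty_of_hausdorffMeasure_zero_inter_ball_lt_one (hR : 0 < R)
    (hZ : ∀ x, μH[0] (Z ∩ ball x R) < 1) : Z = ∅ := by
  refine eq_empty_of_forall_notMem fun z hz ↦ (hZ z).not_ge ?_
  calc 1 = μH[0] {z} := (Measure.hausdorffMeasure_zero_singleton z).symm
    _ ≤ μH[0] (Z ∩ ball z R) :=
      measure_mono (singleton_subset_iff.2 ⟨hz, mem_ball_self hR⟩)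

theorem exists_smallDisjointFamily_cover_of_hausdorffMeasure_ball_le (n : ℕ) :
    ∃ ε : ℝ, 0 < ε ∧ ∀ (X : Type*) [MetricSpace X] [MeasurableSpace X] [BorelSpace X]
      (Z : Set X) (R : ℝ), 0 < R → IsCompact Z →
      (∀ x, μH[(n : ℝ)] (Z ∩ ball x R) ≤ ENNReal.ofReal (ε * R ^ n)) →
      ∃ V : Fin n → Set (Set X), (∀ k, IsSmallDisjointFamily (V k) R) ∧ Z ⊆ ⋃ k, ⋃₀ V k := by
  induction n with
  | zero =>
    refine ⟨1 / 2, one_half_pos, fun X _ _ _ Z R hR _ hball ↦ ⟨finZeroElim, finZeroElim, ?_⟩⟩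
    have hZ : Z = ∅ := eq_empty_of_hausdorffMeasure_zero_inter_ball_lt_one hR fun x ↦ by
      rw [← Nat.cast_zero (R := ℝ)]
      exact (hball x).trans_lt (ENNReal.ofReal_lt_one.2 (by norm_num))
    exact hZ ▸ empty_subset _
  | succ n ih =>
    obtain ⟨ε, hε, ih⟩ := ih
    refine ⟨ε / (4 * 2 ^ n), by positivity, fun X _ _ _ Z R hR hZ hball ↦ ?_⟩
    push_cast at hball
    obtain ⟨W, hW, hWball⟩ := exists_isSeparator_hausdorffMeasure_inter_ball_le hZ hR
      n.cast_nonneg (by positivity) hball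
    obtain ⟨V, hV, hcov⟩ := ih X W (R / 2) (half_pos hR)
      (hZ.of_isClosed_subset hW.isClosed hW.subset) fun x ↦ by
        convert hWball x using 2
        rw [div_pow, pow_succ]
        field_simp
    exact hW.exists_cover_cons (fun k ↦ (hV k).mono (half_le_self hR.le)) hcov

end CoveringTheorem

lemma unitBallVolume_pos (d : ℕ) : 0 < unitBallVolume d :=
  ENNReal.ofReal_pos.2 <| div_pos (Real.rpow_pos_of_pos Real.pi_pos _) <|
    Real.Gamma_pos_of_pos (by positivity)

lemma exists_ofReal_eq_unitBallVolume_div (d : ℕ) :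
    ∃ ω : ℝ, 0 < ω ∧ unitBallVolume d / 2 ^ d = ENNReal.ofReal ω := by
  have hpos : unitBallVolume d / 2 ^ d ≠ 0 :=
    (ENNReal.div_pos (unitBallVolume_pos d).ne' (by simp)).ne'
  have hfin : unitBallVolume d / 2 ^ d ≠ ⊤ := ENNReal.div_ne_top ENNReal.ofReal_ne_top (by simp)
  exact ⟨_, ENNReal.toReal_pos hpos hfin, (ENNReal.ofReal_toReal hfin).symm⟩

/-- **Theorem 2 (Guth).**  For each dimension `n` there is a constant `cₙ > 0` such that:
if `(Tⁿ, g)` is any Riemannian metric on the `n`-torus and `R < (1/2)·Sys(Tⁿ, g)`, then some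
metric ball of radius `R` in `(Tⁿ, g)` has volume at least `cₙ Rⁿ`.

The Riemannian manifold `(Tⁿ, g)` is encoded as a length metric space `M` homeomorphic to
the `n`-torus; volumes are (normalized) Hausdorff measures. -/
theorem torus_ball_volume (n : ℕ) (hn : 0 < n) :
    ∃ c : ℝ, 0 < c ∧
      ∀ (M : Type) [MetricSpace M] [MeasurableSpace M] [BorelSpace M],
        Nonempty (M ≃ₜ Torus n) → IsLengthMetric M →
        ∀ R : ℝ, 0 < R → ENNReal.ofReal (2 * R) < systole M →
          ∃ x : M, ENNReal.ofReal (c * R ^ n) ≤ rvol n (Metric.ball x R) := by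
  obtain ⟨ε, hε, hcover⟩ := exists_smallDisjointFamily_cover_of_hausdorffMeasure_ball_le n
  obtain ⟨ω, hω, hω_eq⟩ := exists_ofReal_eq_unitBallVolume_div n
  refine ⟨ω * ε, mul_pos hω hε, fun M _ _ _ ⟨e⟩ hM R hR hsys ↦ ?_⟩
  by_contra! hsmall
  have : CompactSpace M := e.symm.compactSpace
  have hball (x : M) : μH[(n : ℝ)] (univ ∩ ball x R) ≤ ENNReal.ofReal (ε * R ^ n) := by
    have hvol := (hsmall x).le
    rw [rvol, hω_eq, mul_assoc, ENNReal.ofReal_mul hω.le] at hvol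
    rw [univ_inter]
    exact (ENNReal.mul_le_mul_iff_right (ENNReal.ofReal_pos.2 hω).ne' ENNReal.ofReal_ne_top).1 hvol
  obtain ⟨V, hV, hcov⟩ := hcover M univ R hR isCompact_univ hball
  have hlt := lt_card_of_smallDisjointFamily_cover e hM hsys.le hV (univ_subset_iff.1 hcov)
  exact hlt.ne (Fintype.card_fin n).symm

end
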